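/- For all p, q ∈ [0,1], the duality gap of the strategy pair (p,q) in Bandit Game 2 satisfies Gap2(p,q) ≥ (p + q)/4. -/

import Mathlib

/-- Expected payoff in a 2×2 zero-sum bandit game where each player's mixed
strategy is identified with the probability of playing its first action. -/
noncomputable def banditPayoff (r : Fin 2 → Fin 2 → ℝ) (p q : ℝ) : ℝ :=
  p * q * r 0 0 + p * (1 - q) * r 0 1 + (1 - p) * q * r 1 0 + (1 - p) * (1 - q) * r 1 1

/-- Duality gap of the strategy pair `(p, q)` in the bandit game `r`. -/
noncomputable def banditGap (r : Fin 2 → Fin 2 → ℝ) (p q : ℝ) : ℝ :=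
  sSup ((fun p' => banditPayoff r p' q) '' Set.Icc (0 : ℝ) 1) -
    sInf ((fun q' => banditPayoff r p q') '' Set.Icc (0 : ℝ) 1)

/-- Bandit Game 2. -/
noncomputable def banditGame2 : Fin 2 → Fin 2 → ℝ :=
  ![![1/4, 1/2], ![1, 3/4]]

section BanditGame

variable (r : Fin 2 → Fin 2 → ℝ)

lemma continuous_banditPayoff_left (q : ℝ) : Continuous fun p => banditPayoff r p q := by
  unfold banditPayoff
  fun_prop

lemma continuous_banditPayoff_right (p : ℝ) : Continuous fun q => banditPayoff r p q := by
  unfold banditPayoff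
  fun_prop

lemma banditPayoff_zero_left (q : ℝ) : banditPayoff r 0 q = q * r 1 0 + (1 - q) * r 1 1 := by
  unfold banditPayoff
  ring

lemma banditPayoff_zero_right (p : ℝ) : banditPayoff r p 0 = p * r 0 1 + (1 - p) * r 1 1 := by
  unfold banditPayoff
  ring

lemma banditPayoff_sub_banditPayoff_le_banditGap (p q : ℝ) {p' q' : ℝ}
    (hp' : p' ∈ Set.Icc (0 : ℝ) 1) (hq' : q' ∈ Set.Icc (0 : ℝ) 1) :
    banditPayoff r p' q - banditPayoff r p q' ≤ banditGap r p q :=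
  sub_le_sub
    (le_csSup (isCompact_Icc.bddAbove_image (continuous_banditPayoff_left r q).continuousOn)
      (Set.mem_image_of_mem _ hp'))
    (csInf_le (isCompact_Icc.bddBelow_image (continuous_banditPayoff_right r p).continuousOn)
      (Set.mem_image_of_mem _ hq'))

/-- The bound comes from each player deviating, on its own, to its second action. -/
theorem banditGame2_gap_lower_bound_general (p q : ℝ) :
    p * (r 1 1 - r 0 1) + q * (r 1 0 - r 1 1) ≤ banditGap r p q :=
  calc p * (r 1 1 - r 0 1) + q * (r 1 0 - r 1 1)
      = banditPayoff r 0 q - banditPayoff r p 0 := by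
        rw [banditPayoff_zero_left, banditPayoff_zero_right]
        ring
    _ ≤ banditGap r p q :=
        banditPayoff_sub_banditPayoff_le_banditGap r p q
          (Set.left_mem_Icc.2 zero_le_one) (Set.left_mem_Icc.2 zero_le_one)

end BanditGame

theorem banditGame2_gap_lower_bound (p q : ℝ)
    (hp : p ∈ Set.Icc (0 : ℝ) 1) (hq : q ∈ Set.Icc (0 : ℝ) 1) :
    (p + q) / 4 ≤ banditGap banditGame2 p q :=
  calc (p + q) / 4 = p * (3 / 4 - 1 / 2) + q * (1 - 3 / 4) := by ring
    _ ≤ banditGap banditGame2 p q := banditGame2_gap_lower_bound_general banditGame2 p q
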